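/- Let X be a Tychonoff topological space, let 𝔅 be a bornology with compact base on X, and let κ be an infinite cardinal. If every 𝔅-cover of X consisting of G_κ-sets has a 𝔅-subcover of cardinality at most κ, then no family of collections of subsets of C_𝔅(X) is κ-singular at the zero function 0̄. -/

import Mathlib

open Set Topology

universe u

/-- A bornology on `X`: a collection of subsets covering `X`, closed under
taking subsets and under finite unions. -/
structure IsBornology {X : Type*} (𝔅 : Set (Set X)) : Prop where
  covers : ⋃₀ 𝔅 = Set.univ
  empty_mem : ∅ ∈ 𝔅
  subset_mem : ∀ ⦃A B : Set X⦄, B ∈ 𝔅 → A ⊆ B → A ∈ 𝔅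
  union_mem : ∀ ⦃A B : Set X⦄, A ∈ 𝔅 → B ∈ 𝔅 → A ∪ B ∈ 𝔅

/-- `𝔅` has a compact base: every member of `𝔅` is contained in a compact member of `𝔅`. -/
def HasCompactBase {X : Type*} [TopologicalSpace X] (𝔅 : Set (Set X)) : Prop :=
  ∀ B ∈ 𝔅, ∃ K ∈ 𝔅, IsCompact K ∧ B ⊆ K

/-- The set of continuous real-valued functions on `X` (as a bare type, to be
topologized by a bornology). -/
def CFn (X : Type u) [TopologicalSpace X] : Type u := {f : X → ℝ // Continuous f}

/-- The zero function as an element of `CFn X`. -/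
def zeroFn (X : Type u) [TopologicalSpace X] : CFn X := ⟨fun _ => 0, continuous_const⟩

/-- The basic "ball" `⟨B, ε⟩[f] = {g : ∀ x ∈ B, |f x − g x| < ε}`. -/
def unifBall {X : Type u} [TopologicalSpace X] (f : CFn X) (B : Set X) (ε : ℝ) :
    Set (CFn X) :=
  {g | ∀ x ∈ B, |f.1 x - g.1 x| < ε}

/-- The topology of uniform convergence on members of a bornology `𝔅`:
a set is open iff around each of its points it contains a basic ball
`⟨B, ε⟩[f]` with `B ∈ 𝔅`, `ε > 0`.  This makes `CFn X` into `C_𝔅(X)`. -/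
def bornTopology {X : Type u} [TopologicalSpace X] (𝔅 : Set (Set X))
    (hB : IsBornology 𝔅) : TopologicalSpace (CFn X) where
  IsOpen U := ∀ f ∈ U, ∃ B ∈ 𝔅, ∃ ε > (0 : ℝ), unifBall f B ε ⊆ U
  isOpen_univ := fun f _ => ⟨∅, hB.empty_mem, 1, one_pos, fun _ _ => trivial⟩
  isOpen_inter := by
    intro U V hU hV f hf
    obtain ⟨B₁, hB₁, ε₁, hε₁, h₁⟩ := hU f hf.1
    obtain ⟨B₂, hB₂, ε₂, hε₂, h₂⟩ := hV f hf.2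
    refine ⟨B₁ ∪ B₂, hB.union_mem hB₁ hB₂, min ε₁ ε₂, lt_min hε₁ hε₂, fun g hg => ⟨?_, ?_⟩⟩
    · exact h₁ fun x hx => lt_of_lt_of_le (hg x (Or.inl hx)) (min_le_left _ _)
    · exact h₂ fun x hx => lt_of_lt_of_le (hg x (Or.inr hx)) (min_le_right _ _)
  isOpen_sUnion := by
    intro S hS f hf
    obtain ⟨U, hU, hfU⟩ := hf
    obtain ⟨B, hB', ε, hε, h⟩ := hS U hU f hfU
    exact ⟨B, hB', ε, hε, h.trans (Set.subset_sUnion_of_mem hU)⟩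

/-- `Ω_z`: the family of all subsets of `Z ∖ {z}` having `z` in their closure. -/
def OmegaAt {Z : Type*} [TopologicalSpace Z] (z : Z) : Set (Set Z) :=
  {A | A ⊆ {z}ᶜ ∧ z ∈ closure A}

/-- `𝒢` is a `𝔅`-cover of `X`: every member of `𝔅` is contained in a member of `𝒢`. -/
def IsBCover {X : Type*} (𝔅 : Set (Set X)) (𝒢 : Set (Set X)) : Prop :=
  ∀ B ∈ 𝔅, ∃ G ∈ 𝒢, B ⊆ G

/-- `𝒪_𝔅`: the family of all open `𝔅`-covers of `X`. -/
def OpenBCovers {X : Type*} [TopologicalSpace X] (𝔅 : Set (Set X)) : Set (Set (Set X)) :=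
  {𝒰 | (∀ U ∈ 𝒰, IsOpen U) ∧ IsBCover 𝔅 𝒰}

/-- `𝒢` is a K-cover of `X`: every compact subset of `X` is contained in a member of `𝒢`. -/
def IsKCover {X : Type*} [TopologicalSpace X] (𝒢 : Set (Set X)) : Prop :=
  ∀ K : Set X, IsCompact K → ∃ G ∈ 𝒢, K ⊆ G

/-- `𝒦`: the family of all open K-covers of `X`. -/
def KCovers (X : Type*) [TopologicalSpace X] : Set (Set (Set X)) :=
  {𝒰 | (∀ U ∈ 𝒰, IsOpen U) ∧ IsKCover 𝒰}

/-- Player II has a winning strategy in the game `G₁(𝒜, 𝒞)` (of length `ω`):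
a function assigning to each finite sequence `(A₀, …, Aₙ)` of moves of player I an
element of `Aₙ`, such that in any play following it the chosen points form a member of `𝒞`. -/
def G1WinII {T : Type*} (𝒜 𝒞 : Set (Set T)) : Prop :=
  ∃ σ : (n : ℕ) → (Fin (n + 1) → Set T) → T,
    (∀ (n : ℕ) (h : Fin (n + 1) → Set T), (∀ i, h i ∈ 𝒜) → σ n h ∈ h (Fin.last n)) ∧
    ∀ A : ℕ → Set T, (∀ n, A n ∈ 𝒜) →
      (Set.range fun n => σ n fun i => A i.1) ∈ 𝒞

/-- Player II has a winning strategy in the transfinite game `G₁^α(𝒜, 𝒞)` of length `α`. -/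
def G1WinIIOrd {T : Type*} (α : Ordinal.{0}) (𝒜 𝒞 : Set (Set T)) : Prop :=
  ∃ σ : (γ : {γ : Ordinal.{0} // γ < α}) → ({δ : Ordinal.{0} // δ ≤ γ.1} → Set T) → T,
    (∀ (γ : {γ : Ordinal.{0} // γ < α}) (h : {δ : Ordinal.{0} // δ ≤ γ.1} → Set T),
      (∀ δ, h δ ∈ 𝒜) → σ γ h ∈ h ⟨γ.1, le_rfl⟩) ∧
    ∀ A : {γ : Ordinal.{0} // γ < α} → Set T, (∀ γ, A γ ∈ 𝒜) →
      (Set.range fun γ : {γ : Ordinal.{0} // γ < α} =>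
        σ γ fun δ => A ⟨δ.1, lt_of_le_of_lt δ.2 γ.2⟩) ∈ 𝒞

/-- The selection principle `S₁(𝒜, 𝒞)`. -/
def S1 {T : Type*} (𝒜 𝒞 : Set (Set T)) : Prop :=
  ∀ A : ℕ → Set T, (∀ n, A n ∈ 𝒜) →
    ∃ a : ℕ → T, (∀ n, a n ∈ A n) ∧ Set.range a ∈ 𝒞

/-- `Z` has countable tightness. -/
def CountablyTight (Z : Type*) [TopologicalSpace Z] : Prop :=
  ∀ (z : Z) (A : Set Z), z ∈ closure A → ∃ B ⊆ A, B.Countable ∧ z ∈ closure B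

/-- `Z` is productively countably tight: `Z × Y` has countable tightness
for every countably tight space `Y`. -/
def ProductivelyCountablyTight (Z : Type u) [TopologicalSpace Z] : Prop :=
  ∀ (Y : Type u) [TopologicalSpace Y], CountablyTight Y → CountablyTight (Z × Y)

/-- `Z` has tightness at most `κ`. -/
def TightnessLE (Z : Type u) [TopologicalSpace Z] (κ : Cardinal.{u}) : Prop :=
  ∀ (z : Z) (A : Set Z), z ∈ closure A → ∃ B ⊆ A, Cardinal.mk B ≤ κ ∧ z ∈ closure B

/-- `κ ∈ Sp(Z)`: for every space `Y` of tightness at most `κ`, the product `Z × Y`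
has tightness at most `κ`. -/
def MemSp (Z : Type u) [TopologicalSpace Z] (κ : Cardinal.{u}) : Prop :=
  ∀ (Y : Type u) [TopologicalSpace Y], TightnessLE Y κ → TightnessLE (Z × Y) κ

/-- `G` is a `G_κ`-set: an intersection of at most `κ` open sets. -/
def IsGKappaSet {X : Type u} [TopologicalSpace X] (κ : Cardinal.{u}) (G : Set X) : Prop :=
  ∃ 𝒪 : Set (Set X), (∀ O ∈ 𝒪, IsOpen O) ∧ Cardinal.mk 𝒪 ≤ κ ∧ G = ⋂₀ 𝒪

/-- `G` is a `G_δ`-set: an intersection of countably many open sets. -/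
def IsGDeltaSet {X : Type*} [TopologicalSpace X] (G : Set X) : Prop :=
  ∃ 𝒪 : Set (Set X), (∀ O ∈ 𝒪, IsOpen O) ∧ 𝒪.Countable ∧ G = ⋂₀ 𝒪

/-- A family `ℙ` of collections of subsets of `Z` is `κ`-singular at `z`. -/
def KappaSingularAt {Z : Type u} [TopologicalSpace Z] (κ : Cardinal.{u})
    (ℙ : Set (Set (Set Z))) (z : Z) : Prop :=
  (∀ ξ ∈ ℙ, ∀ A ∈ ξ, Cardinal.mk A ≤ κ) ∧
  (∀ ξ ∈ ℙ, ∀ F : Finset (Set Z), ↑F ⊆ ξ → (⋂₀ (F : Set (Set Z))).Nonempty) ∧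
  (∀ O : Set Z, IsOpen O → z ∈ O → ∃ ξ ∈ ℙ, ∃ A ∈ ξ, A ⊆ O) ∧
  (∀ ℰ ⊆ ℙ, Cardinal.mk ℰ ≤ κ → ∃ c : Set (Set Z) → Set Z,
    (∀ ξ ∈ ℰ, c ξ ∈ ξ) ∧ z ∉ closure (⋃ ξ ∈ ℰ, c ξ))

/-- `X` is an Alster space. -/
def Alster (X : Type*) [TopologicalSpace X] : Prop :=
  ∀ 𝒢 : Set (Set X), (∀ G ∈ 𝒢, IsGDeltaSet G) → IsKCover 𝒢 →
    ∃ 𝒢' ⊆ 𝒢, 𝒢'.Countable ∧ ⋃₀ 𝒢' = Set.univ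

/-- `X` is strongly Alster. -/
def StronglyAlster (X : Type*) [TopologicalSpace X] : Prop :=
  ∀ 𝒢 : Set (Set X), (∀ G ∈ 𝒢, IsGDeltaSet G) → IsKCover 𝒢 →
    ∃ 𝒢' ⊆ 𝒢, 𝒢'.Countable ∧ IsKCover 𝒢'

/-- `X` is productively Lindelöf. -/
def ProductivelyLindelof (X : Type u) [TopologicalSpace X] : Prop :=
  ∀ (Y : Type u) [TopologicalSpace Y], LindelofSpace Y → LindelofSpace (X × Y)

/-- `X` is hemicompact. -/
def Hemicompact (X : Type*) [TopologicalSpace X] : Prop :=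
  ∃ K : ℕ → Set X, (∀ n, IsCompact (K n)) ∧ ∀ C : Set X, IsCompact C → ∃ n, C ⊆ K n

/-!
A member `A` of `ξ ∈ ℙ` lies in the ball `⟨B, ε⟩[f]` exactly when `B` lies in `nearSet f ε A`, the
set of points at which every function of `A` is `ε`-close to `f`; this set is a `G_κ`-set as soon as
`|A| ≤ κ`. Every neighbourhood of `f` contains a member of `⋃₀ ℙ`, and the covering hypothesis,
applied once for each `ε = 1 / (n + 1)`, yields a subfamily of cardinality at most `κ` with the same
property. No such subfamily exists for a `κ`-singular `ℙ`: each of its sets meets the set chosen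
from the corresponding `ξ`, so `f` would be in the closure of the union of the chosen sets.
-/

/-- A family `𝒩` of sets is a local π-network at `z` if every neighbourhood of `z` contains a member
of `𝒩`. The members of `𝒩` are not required to be nonempty. -/
def IsLocalPiNetwork {Z : Type*} [TopologicalSpace Z] (𝒩 : Set (Set Z)) (z : Z) : Prop :=
  ∀ U ∈ 𝓝 z, ∃ A ∈ 𝒩, A ⊆ U

namespace KappaSingularAt

variable {Z : Type u} [TopologicalSpace Z] {κ : Cardinal.{u}} {ℙ : Set (Set (Set Z))} {z : Z}

theorem mk_le_of_mem_sUnion (hℙ : KappaSingularAt κ ℙ z) {A : Set Z} (hA : A ∈ ⋃₀ ℙ) :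
    Cardinal.mk A ≤ κ :=
  let ⟨ξ, hξ, hAξ⟩ := hA
  hℙ.1 ξ hξ A hAξ

theorem inter_nonempty (hℙ : KappaSingularAt κ ℙ z) {ξ : Set (Set Z)} (hξ : ξ ∈ ℙ) {A C : Set Z}
    (hA : A ∈ ξ) (hC : C ∈ ξ) : (A ∩ C).Nonempty := by
  classical
  simpa using hℙ.2.1 ξ hξ {A, C} (by simp [insert_subset_iff, hA, hC])

theorem isLocalPiNetwork (hℙ : KappaSingularAt κ ℙ z) : IsLocalPiNetwork (⋃₀ ℙ) z := by
  intro U hU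
  obtain ⟨O, hOU, hO, hzO⟩ := mem_nhds_iff.1 hU
  obtain ⟨ξ, hξ, A, hA, hAO⟩ := hℙ.2.2.1 O hO hzO
  exact ⟨A, ⟨ξ, hξ, hA⟩, hAO.trans hOU⟩

theorem not_isLocalPiNetwork (hℙ : KappaSingularAt κ ℙ z) {𝒜 : Set (Set Z)} (h𝒜 : 𝒜 ⊆ ⋃₀ ℙ)
    (hcard : Cardinal.mk 𝒜 ≤ κ) : ¬ IsLocalPiNetwork 𝒜 z := by
  intro hnet
  choose ξ hξℙ hξ using fun A : 𝒜 ↦ h𝒜 A.2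
  obtain ⟨c, hc, hz⟩ :=
    hℙ.2.2.2 (range ξ) (range_subset_iff.2 hξℙ) (Cardinal.mk_range_le.trans hcard)
  obtain ⟨A, hA, hdisj⟩ := hnet _ (isClosed_closure.isOpen_compl.mem_nhds hz)
  have hmem : ξ ⟨A, hA⟩ ∈ range ξ := mem_range_self _
  obtain ⟨g, hgA, hgc⟩ := hℙ.inter_nonempty (hξℙ ⟨A, hA⟩) (hξ _) (hc _ hmem)
  exact hdisj hgA (subset_closure (mem_biUnion hmem hgc))

end KappaSingularAt

section FunctionSpace

variable {X : Type u} [TopologicalSpace X]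

theorem mem_unifBall_self (f : CFn X) (B : Set X) {ε : ℝ} (hε : 0 < ε) : f ∈ unifBall f B ε :=
  fun _ _ ↦ by simpa using hε

theorem unifBall_subset_unifBall_add {f g : CFn X} {B : Set X} {δ : ℝ} (hg : g ∈ unifBall f B δ)
    (η : ℝ) : unifBall g B η ⊆ unifBall f B (δ + η) := fun _ hk x hx ↦
  (abs_sub_le _ (g.1 x) _).trans_lt (add_lt_add (hg x hx) (hk x hx))

theorem unifBall_mem_nhds {𝔅 : Set (Set X)} (hB : IsBornology 𝔅) (f : CFn X) {B : Set X}
    (hB𝔅 : B ∈ 𝔅) {ε : ℝ} (hε : 0 < ε) : unifBall f B ε ∈ @nhds _ (bornTopology 𝔅 hB) f := by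
  let := bornTopology 𝔅 hB
  -- When `B` is not compact, the ball itself need not be open.
  let V : Set (CFn X) := {g | ∃ δ > 0, unifBall g B δ ⊆ unifBall f B ε}
  have hV : IsOpen V := by
    rintro g ⟨δ, hδ, hsub⟩
    refine ⟨B, hB𝔅, δ / 2, half_pos hδ, fun k hk ↦ ⟨δ / 2, half_pos hδ, ?_⟩⟩
    calc unifBall k B (δ / 2) ⊆ unifBall g B (δ / 2 + δ / 2) := unifBall_subset_unifBall_add hk _
      _ = unifBall g B δ := by rw [add_halves]
      _ ⊆ unifBall f B ε := hsub
  have hVsub : V ⊆ unifBall f B ε := fun g ⟨_, hδ, hsub⟩ ↦ hsub (mem_unifBall_self g B hδ)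
  exact mem_nhds_iff.2 ⟨V, hVsub, hV, ε, hε, Subset.rfl⟩

theorem hasBasis_nhds_bornTopology {𝔅 : Set (Set X)} (hB : IsBornology 𝔅) (f : CFn X) :
    (@nhds _ (bornTopology 𝔅 hB) f).HasBasis (fun p : Set X × ℝ ↦ p.1 ∈ 𝔅 ∧ 0 < p.2)
      fun p ↦ unifBall f p.1 p.2 := by
  let := bornTopology 𝔅 hB
  refine ⟨fun U ↦ ⟨fun hU ↦ ?_, fun ⟨_, ⟨hB𝔅, hε⟩, hsub⟩ ↦
    Filter.mem_of_superset (unifBall_mem_nhds hB f hB𝔅 hε) hsub⟩⟩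
  obtain ⟨O, hOU, hO, hfO⟩ := mem_nhds_iff.1 hU
  obtain ⟨B, hB𝔅, ε, hε, hsub⟩ := hO f hfO
  exact ⟨(B, ε), ⟨hB𝔅, hε⟩, hsub.trans hOU⟩

/-- The set of points at which every function of `A` is `ε`-close to `f`. It turns a set of
functions into a subset of `X`, and so local π-networks at `f` into `𝔅`-covers of `X`. -/
def nearSet (f : CFn X) (ε : ℝ) (A : Set (CFn X)) : Set X :=
  {x | ∀ g ∈ A, |f.1 x - g.1 x| < ε}

theorem subset_nearSet_iff {f : CFn X} {ε : ℝ} {A : Set (CFn X)} {B : Set X} :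
    B ⊆ nearSet f ε A ↔ A ⊆ unifBall f B ε :=
  ⟨fun h g hg _ hx ↦ h hx g hg, fun h _ hx _ hg ↦ h hg _ hx⟩

theorem nearSet_mono (f : CFn X) {δ ε : ℝ} (hδε : δ ≤ ε) (A : Set (CFn X)) :
    nearSet f δ A ⊆ nearSet f ε A :=
  fun _ hx g hg ↦ (hx g hg).trans_le hδε

theorem isGKappaSet_nearSet {κ : Cardinal.{u}} (f : CFn X) (ε : ℝ) {A : Set (CFn X)}
    (hA : Cardinal.mk A ≤ κ) : IsGKappaSet κ (nearSet f ε A) := by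
  refine ⟨(fun g : CFn X ↦ {x | |f.1 x - g.1 x| < ε}) '' A, ?_, Cardinal.mk_image_le.trans hA, ?_⟩
  · rintro _ ⟨g, -, rfl⟩
    exact isOpen_lt (f.2.sub g.2).abs continuous_const
  · ext x
    simp [nearSet]

theorem isLocalPiNetwork_iff_isBCover_nearSet {𝔅 : Set (Set X)} (hB : IsBornology 𝔅) {f : CFn X}
    {𝒩 : Set (Set (CFn X))} :
    @IsLocalPiNetwork _ (bornTopology 𝔅 hB) 𝒩 f ↔ ∀ ε > 0, IsBCover 𝔅 (nearSet f ε '' 𝒩) := by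
  let := bornTopology 𝔅 hB
  simp only [IsBCover, exists_mem_image, subset_nearSet_iff]
  constructor
  · exact fun h ε hε B hB𝔅 ↦ h _ (unifBall_mem_nhds hB f hB𝔅 hε)
  · intro h U hU
    obtain ⟨⟨B, ε⟩, ⟨hB𝔅, hε⟩, hsub⟩ := (hasBasis_nhds_bornTopology hB f).mem_iff.1 hU
    obtain ⟨A, hA, hAB⟩ := h ε hε B hB𝔅
    exact ⟨A, hA, hAB.trans hsub⟩

end FunctionSpace

theorem mk_iUnion_le_of_countable {α : Type u} {ι : Type*} [Countable ι] {κ : Cardinal.{u}}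
    (hκ : Cardinal.aleph0 ≤ κ) {s : ι → Set α} (hs : ∀ i, Cardinal.mk (s i) ≤ κ) :
    Cardinal.mk (⋃ i, s i) ≤ κ := by
  have hι : Cardinal.lift.{u} (Cardinal.mk ι) ≤ Cardinal.lift κ :=
    (Cardinal.lift_le_aleph0.2 Cardinal.mk_le_aleph0).trans (Cardinal.aleph0_le_lift.2 hκ)
  have hsup : ⨆ i, Cardinal.lift (Cardinal.mk (s i)) ≤ Cardinal.lift κ :=
    ciSup_le' fun i ↦ Cardinal.lift_le.2 (hs i)
  refine Cardinal.lift_le.1 ((Cardinal.mk_iUnion_le_lift s).trans ?_)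
  exact (mul_le_mul' hι hsup).trans (Cardinal.mul_eq_self (Cardinal.aleph0_le_lift.2 hκ)).le

theorem IsLocalPiNetwork.exists_subset_mk_le {X : Type u} [TopologicalSpace X]
    {𝔅 : Set (Set X)} {hB : IsBornology 𝔅} {κ : Cardinal.{u}} {f : CFn X} {𝒩 : Set (Set (CFn X))}
    (h𝒩 : @IsLocalPiNetwork _ (bornTopology 𝔅 hB) 𝒩 f) (hκ : Cardinal.aleph0 ≤ κ)
    (h : ∀ 𝒢 : Set (Set X), (∀ G ∈ 𝒢, IsGKappaSet κ G) → IsBCover 𝔅 𝒢 →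
      ∃ 𝒢' ⊆ 𝒢, Cardinal.mk 𝒢' ≤ κ ∧ IsBCover 𝔅 𝒢')
    (hcard : ∀ A ∈ 𝒩, Cardinal.mk A ≤ κ) :
    ∃ 𝒜 ⊆ 𝒩, Cardinal.mk 𝒜 ≤ κ ∧ @IsLocalPiNetwork _ (bornTopology 𝔅 hB) 𝒜 f := by
  have hsub (n : ℕ) : ∃ 𝒜 ⊆ 𝒩, Cardinal.mk 𝒜 ≤ κ ∧
      IsBCover 𝔅 (nearSet f (1 / ((n : ℝ) + 1)) '' 𝒜) := by
    obtain ⟨𝒢, h𝒢𝒩, h𝒢κ, h𝒢⟩ := h _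
      (forall_mem_image.2 fun A hA ↦ isGKappaSet_nearSet f _ (hcard A hA))
      ((isLocalPiNetwork_iff_isBCover_nearSet hB).1 h𝒩 _ (Nat.one_div_pos_of_nat (n := n)))
    obtain ⟨𝒜, h𝒜𝒩, hinj, rfl⟩ := SurjOn.exists_subset_injOn_image_eq h𝒢𝒩
    exact ⟨𝒜, h𝒜𝒩, (Cardinal.mk_image_eq_of_injOn _ 𝒜 hinj).ge.trans h𝒢κ, h𝒢⟩
  choose 𝒜 h𝒜𝒩 h𝒜κ h𝒜 using hsub
  refine ⟨⋃ n, 𝒜 n, iUnion_subset h𝒜𝒩, mk_iUnion_le_of_countable hκ h𝒜κ,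
    (isLocalPiNetwork_iff_isBCover_nearSet hB).2 fun ε hε B hB𝔅 ↦ ?_⟩
  obtain ⟨n, hn⟩ := exists_nat_one_div_lt hε
  obtain ⟨_, ⟨A, hA, rfl⟩, hBA⟩ := h𝒜 n B hB𝔅
  exact ⟨_, mem_image_of_mem _ (mem_iUnion_of_mem n hA), hBA.trans (nearSet_mono f hn.le A)⟩

theorem stmt7_general {X : Type u} [TopologicalSpace X]
    (𝔅 : Set (Set X)) (hB : IsBornology 𝔅) (κ : Cardinal.{u}) (hκ : Cardinal.aleph0 ≤ κ)
    (h : ∀ 𝒢 : Set (Set X), (∀ G ∈ 𝒢, IsGKappaSet κ G) → IsBCover 𝔅 𝒢 →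
      ∃ 𝒢' ⊆ 𝒢, Cardinal.mk 𝒢' ≤ κ ∧ IsBCover 𝔅 𝒢')
    (f : CFn X) (ℙ : Set (Set (Set (CFn X)))) :
    ¬ @KappaSingularAt (CFn X) (bornTopology 𝔅 hB) κ ℙ f := by
  let := bornTopology 𝔅 hB
  intro hℙ
  obtain ⟨𝒜, h𝒜ℙ, h𝒜κ, h𝒜⟩ :=
    hℙ.isLocalPiNetwork.exists_subset_mk_le hκ h fun _ ↦ hℙ.mk_le_of_mem_sUnion
  exact hℙ.not_isLocalPiNetwork h𝒜ℙ h𝒜κ h𝒜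

/-- If every `𝔅`-cover of `X` by `G_κ`-sets has a `𝔅`-subcover of
cardinality at most `κ`, then no family of collections of subsets of `C_𝔅(X)` is
`κ`-singular at `0̄`. -/
theorem stmt7 {X : Type u} [TopologicalSpace X] [T35Space X]
    (𝔅 : Set (Set X)) (hB : IsBornology 𝔅) (hcb : HasCompactBase 𝔅)
    (κ : Cardinal.{u}) (hκ : Cardinal.aleph0 ≤ κ)
    (h : ∀ 𝒢 : Set (Set X), (∀ G ∈ 𝒢, IsGKappaSet κ G) → IsBCover 𝔅 𝒢 →
      ∃ 𝒢' ⊆ 𝒢, Cardinal.mk 𝒢' ≤ κ ∧ IsBCover 𝔅 𝒢') :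
    ∀ ℙ : Set (Set (Set (CFn X))),
      ¬ @KappaSingularAt (CFn X) (bornTopology 𝔅 hB) κ ℙ (zeroFn X) :=
  stmt7_general 𝔅 hB κ hκ h (zeroFn X)
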